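/- Let G be a group. The following are equivalent: (A) for every commutative ring A with an action of G by ring automorphisms and all G-stable ideals a, b of A, rad_G(a) ⊆ rad_G(b) if and only if rad(a) ⊆ rad(b); (A1) for every such A and every G-stable additive subgroup X of A, X ⊆ rad_G((0)) if and only if every element of X is nilpotent; (A2) for every such A, rad_G((0)) equals the nilradical of A. -/

import Mathlib

/-!
The `G`-radical commutes with preimages along equivariant surjections, and so does the ordinary
radical. Since a `G`-stable ideal `a` is the preimage of the zero ideal of `A ⧸ a`, property (A2)
for all these quotients says that `rad_G(a) = rad(a)` for every `G`-stable ideal `a`, and (A)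
follows. Conversely, (A) applied to the nilradical and the zero ideal, which have the same radical,
gives (A2). Finally (A1) is (A2) tested on `G`-stable additive subgroups, since the nilradical is
the largest one that consists of nilpotents.
-/

/-- An ideal of `A` is `G`-stable if it is preserved by the action of every `g : G`. -/
def IsGStableIdeal (G : Type*) {A : Type*} [Group G] [CommRing A] [MulSemiringAction G A]
    (I : Ideal A) : Prop :=
  ∀ g : G, ∀ x ∈ I, g • x ∈ I

/-- The `G`-radical of a `G`-stable ideal `a`: the sum of all `G`-stable ideals `c`
with `c ^ n ⊆ a` for some `n ≥ 1`. -/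
def gRadical (G : Type*) {A : Type*} [Group G] [CommRing A] [MulSemiringAction G A]
    (a : Ideal A) : Ideal A :=
  sSup {c : Ideal A | IsGStableIdeal G c ∧ ∃ n ≥ 1, c ^ n ≤ a}

universe u v

/-- Property (A) for a group `G` (over commutative rings in universe `u`). -/
def PropA (G : Type v) [Group G] : Prop :=
  ∀ (A : Type u) [CommRing A] [MulSemiringAction G A], ∀ a b : Ideal A,
    IsGStableIdeal G a → IsGStableIdeal G b →
      (gRadical G a ≤ gRadical G b ↔ a.radical ≤ b.radical)

/-- Property (A1) for a group `G`: a `G`-stable additive subgroup consists of nilpotents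
iff it is contained in the `G`-radical of the zero ideal. -/
def PropA1 (G : Type v) [Group G] : Prop :=
  ∀ (A : Type u) [CommRing A] [MulSemiringAction G A], ∀ X : AddSubgroup A,
    (∀ g : G, ∀ x ∈ X, g • x ∈ X) →
      ((X : Set A) ⊆ (gRadical G (⊥ : Ideal A) : Set A) ↔ ∀ x ∈ X, IsNilpotent x)

/-- Property (A2) for a group `G`: the `G`-radical of the zero ideal is the nilradical. -/
def PropA2 (G : Type v) [Group G] : Prop :=
  ∀ (A : Type u) [CommRing A] [MulSemiringAction G A],
    gRadical G (⊥ : Ideal A) = nilradical A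

section GRadical

variable {G A B : Type*} [Group G] [CommRing A] [CommRing B] [MulSemiringAction G A]
  [MulSemiringAction G B] {a c : Ideal A} {b : Ideal B} {f : A →+* B}

theorem isGStableIdeal_bot : IsGStableIdeal G (⊥ : Ideal A) := by
  rintro g x rfl
  exact smul_zero g

theorem IsGStableIdeal.radical (ha : IsGStableIdeal G a) : IsGStableIdeal G a.radical := by
  rintro g x ⟨n, hn⟩
  exact ⟨n, smul_pow' g x n ▸ ha g _ hn⟩

theorem isGStableIdeal_nilradical : IsGStableIdeal G (nilradical A) :=
  isGStableIdeal_bot.radical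

theorem IsGStableIdeal.comap (hb : IsGStableIdeal G b) (hf : ∀ (g : G) x, f (g • x) = g • f x) :
    IsGStableIdeal G (b.comap f) := fun g x hx => by
  rw [Ideal.mem_comap, hf]
  exact hb g _ hx

theorem IsGStableIdeal.map (ha : IsGStableIdeal G a) (hf : ∀ (g : G) x, f (g • x) = g • f x) :
    IsGStableIdeal G (a.map f) := by
  intro g
  suffices a.map f ≤ (a.map f).comap (MulSemiringAction.toRingHom G B g) from fun _ hy => this hy
  refine Ideal.map_le_iff_le_comap.mpr fun x hx => ?_
  change g • f x ∈ a.map f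
  exact hf g x ▸ Ideal.mem_map_of_mem f (ha g x hx)

theorem IsGStableIdeal.le_gRadical_of_pow_le (hc : IsGStableIdeal G c) {n : ℕ} (h : c ^ n ≤ a) :
    c ≤ gRadical G a :=
  le_sSup ⟨hc, n + 1, n.succ_pos, (Ideal.pow_le_pow_right n.le_succ).trans h⟩

theorem IsGStableIdeal.le_gRadical (ha : IsGStableIdeal G a) : a ≤ gRadical G a :=
  ha.le_gRadical_of_pow_le (pow_one a).le

theorem gRadical_le_radical (a : Ideal A) : gRadical G a ≤ a.radical := by
  refine sSup_le ?_
  rintro c ⟨-, n, -, hn⟩ x hx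
  exact ⟨n, hn (Ideal.pow_mem_pow hx n)⟩

theorem gRadical_comap_le (hf : ∀ (g : G) x, f (g • x) = g • f x) :
    gRadical G (b.comap f) ≤ (gRadical G b).comap f := by
  refine sSup_le ?_
  rintro c ⟨hc, n, -, hn⟩
  have map_pow_le : c.map f ^ n ≤ b := by
    rwa [← Ideal.map_pow, Ideal.map_le_iff_le_comap]
  exact Ideal.map_le_iff_le_comap.mp ((hc.map hf).le_gRadical_of_pow_le map_pow_le)

theorem gRadical_le_map_gRadical_comap (hf : ∀ (g : G) x, f (g • x) = g • f x)
    (hsurj : Function.Surjective f) : gRadical G b ≤ (gRadical G (b.comap f)).map f := by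
  refine sSup_le ?_
  rintro c ⟨hc, n, -, hn⟩
  have comap_pow_le : c.comap f ^ n ≤ b.comap f :=
    (Ideal.le_comap_pow f n).trans (Ideal.comap_mono hn)
  calc
    c = (c.comap f).map f := (Ideal.map_comap_of_surjective f hsurj c).symm
    _ ≤ (gRadical G (b.comap f)).map f :=
      Ideal.map_mono ((hc.comap hf).le_gRadical_of_pow_le comap_pow_le)

theorem IsGStableIdeal.comap_gRadical (hb : IsGStableIdeal G b)
    (hf : ∀ (g : G) x, f (g • x) = g • f x) (hsurj : Function.Surjective f) :
    (gRadical G b).comap f = gRadical G (b.comap f) := by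
  refine le_antisymm ?_ (gRadical_comap_le hf)
  have ker_le : Ideal.comap f ⊥ ≤ gRadical G (b.comap f) :=
    (Ideal.comap_mono bot_le).trans (hb.comap hf).le_gRadical
  calc
    (gRadical G b).comap f ≤ ((gRadical G (b.comap f)).map f).comap f :=
      Ideal.comap_mono (gRadical_le_map_gRadical_comap hf hsurj)
    _ = gRadical G (b.comap f) ⊔ Ideal.comap f ⊥ := Ideal.comap_map_of_surjective f hsurj _
    _ = gRadical G (b.comap f) := sup_of_le_left ker_le

/-- The action of `G` on `A ⧸ a` induced by its action on `A`, for a `G`-stable ideal `a`. It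
depends on the proof of stability, so it is not an instance. -/
abbrev IsGStableIdeal.quotientAction (ha : IsGStableIdeal G a) : MulSemiringAction G (A ⧸ a) :=
  letI : SMul G (A ⧸ a) := ⟨fun g => Ideal.quotientMap a (MulSemiringAction.toRingHom G A g) (ha g)⟩
  { Ideal.Quotient.mk_surjective.distribMulAction (Ideal.Quotient.mk a).toAddMonoidHom
      fun _ _ => rfl,
    Ideal.Quotient.mk_surjective.mulDistribMulAction (Ideal.Quotient.mk a).toMonoidHom
      fun _ _ => rfl with }

end GRadical

section Properties

variable {G : Type v} [Group G]

theorem PropA2.gRadical_eq_radical (h : PropA2.{u} G) {A : Type u} [CommRing A]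
    [MulSemiringAction G A] {a : Ideal A} (ha : IsGStableIdeal G a) :
    gRadical G a = a.radical := by
  let _ := ha.quotientAction
  let π := Ideal.Quotient.mk a
  have comap_bot : Ideal.comap π ⊥ = a := Ideal.mk_ker
  calc
    gRadical G a = gRadical G (Ideal.comap π ⊥) := by rw [comap_bot]
    _ = (gRadical G ⊥).comap π :=
      (isGStableIdeal_bot.comap_gRadical (fun _ _ => rfl) Ideal.Quotient.mk_surjective).symm
    _ = (Ideal.radical ⊥).comap π := congrArg (Ideal.comap π) (h (A ⧸ a))
    _ = a.radical := by rw [Ideal.comap_radical, comap_bot]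

theorem PropA2.propA (h : PropA2.{u} G) : PropA.{u} G := by
  intro A _ _ a b ha hb
  rw [h.gRadical_eq_radical ha, h.gRadical_eq_radical hb]

theorem PropA.propA2 (h : PropA.{u} G) : PropA2.{u} G := by
  intro A _ _
  have radical_le : (nilradical A).radical ≤ (⊥ : Ideal A).radical :=
    (Ideal.radical_idem ⊥).le
  refine le_antisymm (gRadical_le_radical ⊥) ?_
  calc
    nilradical A ≤ gRadical G (nilradical A) := isGStableIdeal_nilradical.le_gRadical
    _ ≤ gRadical G ⊥ := (h A _ ⊥ isGStableIdeal_nilradical isGStableIdeal_bot).mpr radical_le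

theorem PropA2.propA1 (h : PropA2.{u} G) : PropA1.{u} G := by
  intro A _ _ X _
  rw [h A]
  rfl

theorem PropA1.propA2 (h : PropA1.{u} G) : PropA2.{u} G := by
  intro A _ _
  refine le_antisymm (gRadical_le_radical ⊥) ?_
  exact (h A (nilradical A).toAddSubgroup isGStableIdeal_nilradical).mpr fun _ => mem_nilradical.mp

end Properties

/-- The properties (A), (A1) and (A2) are equivalent. -/
theorem propA_iff_propA1_iff_propA2 (G : Type v) [Group G] :
    (PropA.{u} G ↔ PropA1.{u} G) ∧ (PropA1.{u} G ↔ PropA2.{u} G) := by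
  exact ⟨⟨fun h => h.propA2.propA1, fun h => h.propA2.propA⟩, PropA1.propA2, PropA2.propA1⟩
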